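/- Let q be a prime, let a be an integer with 0 < a < q, let s ∈ ℂ, and let x > 0 be real. Then ∑_{n=1}^∞ F(x/n)·cos(2πna/q)·n^s = q^s · ∑′_{1 ≤ n ≤ x/q} σ_s(n) + q^s ∑_{d ∣ q, d > 1} (1/(d^s·φ(d))) ∑_{χ mod d, χ even} χ(a)·τ(conj(χ)) · ∑′_{1 ≤ n ≤ dx/q} σ_s(χ, n), where the outer sum runs over the divisors d > 1 of q, the middle sum runs over the even Dirichlet characters χ modulo d (including the principal character), conj(χ) denotes the complex conjugate character, and σ_s(n) := ∑_{ℓ∣n} ℓ^s is the ordinary generalized divisor sum. (The left-hand side is a finite sum since F(x/n) = 0 for n > x.) -/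

import Mathlib

open Complex Finset
open scoped Real BigOperators Classical

/-- `F(x) = ⌊x⌋` for non-integral `x`, and `F(x) = x - 1/2` for integral `x`. -/
noncomputable def Ffn (x : ℝ) : ℝ := if ∃ m : ℤ, x = (m : ℝ) then x - 1 / 2 else (⌊x⌋ : ℝ)

/-- Generalized divisor sum `σ_s(n) = ∑_{ℓ ∣ n} ℓ^s`. -/
noncomputable def csigma (s : ℂ) (n : ℕ) : ℂ := ∑ ℓ ∈ n.divisors, (ℓ : ℂ) ^ s

/-- Twisted divisor sum `σ_s(χ, n) = ∑_{ℓ ∣ n} χ(ℓ) ℓ^s`. -/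
noncomputable def sigmaChi {d : ℕ} (χ : DirichletCharacter ℂ d) (s : ℂ) (n : ℕ) : ℂ :=
  ∑ ℓ ∈ n.divisors, χ (ℓ : ZMod d) * (ℓ : ℂ) ^ s

/-- The Gauss sum `τ(conj χ) = ∑_{r mod d} conj(χ(r)) e^{2πir/d}` (zero for modulus `0`). -/
noncomputable def tauConj : (d : ℕ) → DirichletCharacter ℂ d → ℂ
  | 0, _ => 0
  | (m + 1), χ => ∑ r : ZMod (m + 1),
      (starRingEnd ℂ) (χ r) * Complex.exp (2 * (π : ℂ) * Complex.I * (r.val : ℂ) / ((m : ℂ) + 1))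

/-- The primed sum `∑′_{1 ≤ n ≤ y} f(n)`: the term at an integral endpoint is halved. -/
noncomputable def psum (y : ℝ) (f : ℕ → ℂ) : ℂ :=
  (∑ n ∈ Finset.Icc 1 ⌊y⌋₊, f n) -
    (if y = (⌊y⌋₊ : ℝ) ∧ 1 ≤ ⌊y⌋₊ then f ⌊y⌋₊ / 2 else 0)

/-!
Sort the `n` on the left by `e = gcd(n, q)` and write `n = e m`, `q = e d`, so that `m` is coprime
to `d`, `x / n = (d x / q) / m` and the cosine becomes `cos (2 π m a / d)`. Orthogonality of the
characters modulo `d` expands this cosine as `φ(d)⁻¹ ∑ χ(m a) τ(conj χ)` over the even `χ`, and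
`χ(m) = 0` lets `m` run over all integers again. Finally, `F(y / l)` is the primed count of the
multiples of `l` up to `y`, so `∑ F(y / m) χ(m) m ^ s` is the primed sum of `σ_s(χ, n)`. The modulus
`d = 1` gives the first term on the right.
-/

section PrimedSums

lemma Ffn_of_nonneg {y : ℝ} (hy : 0 ≤ y) :
    Ffn y = ⌊y⌋₊ - if y = ⌊y⌋₊ then 1 / 2 else 0 := by
  have isInt_iff : (∃ m : ℤ, y = m) ↔ y = ⌊y⌋₊ := by
    refine ⟨?_, fun h ↦ ⟨⌊y⌋₊, mod_cast h⟩⟩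
    rintro ⟨m, rfl⟩
    lift m to ℕ using mod_cast hy
    simp
  rw [Ffn]
  split_ifs with h h' h'
  · rw [← h']
  · exact absurd (isInt_iff.1 h) h'
  · exact absurd (isInt_iff.2 h') h
  · rw [← natCast_floor_eq_intCast_floor hy, sub_zero]

lemma Ffn_eq_zero {y : ℝ} (hy₀ : 0 < y) (hy₁ : y < 1) : Ffn y = 0 := by
  simp [Ffn_of_nonneg hy₀.le, Nat.floor_eq_zero.2 hy₁, hy₀.ne']

lemma div_natCast_eq_floor_div_iff (y : ℝ) {l : ℕ} (hl : l ≠ 0) :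
    y / l = (⌊y⌋₊ / l : ℕ) ↔ y = ⌊y⌋₊ ∧ l ∣ ⌊y⌋₊ := by
  have hl' : (l : ℝ) ≠ 0 := mod_cast hl
  constructor
  · intro h
    have hy : y = (⌊y⌋₊ / l * l : ℕ) := by
      rw [div_eq_iff hl'] at h
      exact_mod_cast h
    have hfloor : ⌊y⌋₊ = ⌊y⌋₊ / l * l := by
      conv_lhs => rw [hy, Nat.floor_natCast]
    exact ⟨hy.trans (congrArg _ hfloor.symm), hfloor ▸ dvd_mul_left l _⟩
  · rintro ⟨hy, hdvd⟩
    rw [Nat.cast_div hdvd hl', ← hy]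

lemma Ffn_div_natCast {y : ℝ} (hy : 0 ≤ y) {l : ℕ} (hl : l ≠ 0) :
    Ffn (y / l) = (⌊y⌋₊ / l : ℕ) - if y = ⌊y⌋₊ ∧ l ∣ ⌊y⌋₊ then 1 / 2 else 0 := by
  simp only [Ffn_of_nonneg (div_nonneg hy l.cast_nonneg), Nat.floor_div_natCast,
    div_natCast_eq_floor_div_iff y hl]

lemma sum_Icc_sum_divisors {R : Type*} [NonAssocSemiring R] (g : ℕ → R) (N : ℕ) :
    ∑ n ∈ Icc 1 N, ∑ l ∈ n.divisors, g l = ∑ l ∈ Icc 1 N, (N / l : ℕ) * g l := by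
  rw [sum_comm' (t' := Icc 1 N) (s' := fun l ↦ {n ∈ Ioc 0 N | l ∣ n})]
  · simp only [sum_const, Nat.Ioc_filter_dvd_card_eq_div, nsmul_eq_mul]
  · intro n l
    simp only [mem_Icc, Nat.mem_divisors, mem_filter, mem_Ioc]
    constructor
    · rintro ⟨⟨hn, hnN⟩, hln, -⟩
      have := Nat.le_of_dvd hn hln
      have := Nat.pos_of_dvd_of_pos hln hn
      exact ⟨⟨⟨hn, hnN⟩, hln⟩, by lia, by lia⟩
    · rintro ⟨⟨⟨hn, hnN⟩, hln⟩, -⟩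
      exact ⟨⟨hn, hnN⟩, hln, by lia⟩

theorem psum_sum_divisors (y : ℝ) (g : ℕ → ℂ) :
    psum y (fun n ↦ ∑ l ∈ n.divisors, g l) = ∑ l ∈ Icc 1 ⌊y⌋₊, (Ffn (y / l) : ℂ) * g l := by
  have hterm : ∀ l ∈ Icc 1 ⌊y⌋₊, (Ffn (y / l) : ℂ) * g l =
      (⌊y⌋₊ / l : ℕ) * g l - if y = ⌊y⌋₊ ∧ l ∣ ⌊y⌋₊ then g l / 2 else 0 := by
    intro l hl
    obtain ⟨hl₁, hl₂⟩ := mem_Icc.1 hl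
    have hy : 0 ≤ y := zero_le_one.trans (Nat.floor_pos.1 (hl₁.trans hl₂))
    rw [Ffn_div_natCast hy (by lia)]
    split_ifs <;> push_cast <;> ring
  have hdivisors : ⌊y⌋₊.divisors = {l ∈ Icc 1 ⌊y⌋₊ | l ∣ ⌊y⌋₊} := rfl
  rw [psum, sum_congr rfl hterm, sum_sub_distrib, sum_Icc_sum_divisors]
  congr 1
  rcases Nat.eq_zero_or_pos ⌊y⌋₊ with h₀ | hpos
  · simp [h₀]
  · simp only [ite_and, Nat.succ_le_iff, hpos, if_true]
    split_ifs
    · rw [hdivisors, sum_div, sum_filter]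
    · simp

end PrimedSums

section Characters

variable {d : ℕ} [NeZero d]

lemma sum_mul_gaussSum_inv {R : Type*} [CommRing R] [IsDomain R]
    [HasEnoughRootsOfUnity R (Monoid.exponent (ZMod d)ˣ)] (ψ : AddChar (ZMod d) R)
    {b : ZMod d} (hb : IsUnit b) :
    ∑ χ : DirichletCharacter R d, χ b * gaussSum χ⁻¹ ψ = d.totient * ψ b := by
  obtain ⟨u, rfl⟩ := hb
  calc ∑ χ : DirichletCharacter R d, χ u * gaussSum χ⁻¹ ψ
      = ∑ χ : DirichletCharacter R d, gaussSum χ⁻¹ (ψ.mulShift u) := by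
        simp only [gaussSum_mulShift_eq, inv_inv]
    _ = ∑ χ : DirichletCharacter R d, gaussSum χ (ψ.mulShift u) :=
        Fintype.sum_equiv (Equiv.inv _) _ _ fun _ ↦ rfl
    _ = ∑ r, (∑ χ : DirichletCharacter R d, χ r) * ψ (u * r) := by
        simp only [gaussSum, AddChar.mulShift_apply, sum_mul]
        exact sum_comm
    _ = d.totient * ψ u := by
        simp [DirichletCharacter.sum_characters_eq]

lemma tauConj_eq_gaussSum (χ : DirichletCharacter ℂ d) :
    tauConj d χ = gaussSum χ⁻¹ ZMod.stdAddChar := by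
  obtain ⟨m, rfl⟩ := Nat.exists_eq_succ_of_ne_zero (NeZero.ne d)
  refine sum_congr rfl fun r _ ↦ ?_
  rw [← MulChar.star_eq_inv, MulChar.star_apply, ZMod.stdAddChar_apply, ZMod.toCircle_apply]
  push_cast
  rfl

lemma stdAddChar_add_stdAddChar_neg (b : ℤ) :
    ZMod.stdAddChar (b : ZMod d) + ZMod.stdAddChar (-b : ZMod d) =
      2 * (Real.cos (2 * π * b / d) : ℂ) := by
  rw [← Int.cast_neg, ZMod.stdAddChar_coe, ZMod.stdAddChar_coe, ofReal_cos, two_cos]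
  push_cast
  ring_nf

-- Averaging over `b` and `-b` doubles the even characters and annihilates the odd ones.
lemma sum_even_mul_tauConj {b : ℤ} (hb : IsUnit (b : ZMod d)) :
    ∑ χ : DirichletCharacter ℂ d, (if χ.Even then χ b * tauConj d χ else 0) =
      d.totient * (Real.cos (2 * π * b / d) : ℂ) := by
  have heven : ∀ χ : DirichletCharacter ℂ d, (if χ.Even then χ b * tauConj d χ else 0) =
      (χ b * gaussSum χ⁻¹ ZMod.stdAddChar + χ (-b) * gaussSum χ⁻¹ ZMod.stdAddChar) / 2 := by
    intro χ
    rw [tauConj_eq_gaussSum]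
    rcases χ.even_or_odd with h | h
    · rw [if_pos h, h.eval_neg]
      ring
    · rw [if_neg h.not_even, h.eval_neg]
      ring
  rw [sum_congr rfl fun χ _ ↦ heven χ, ← sum_div, sum_add_distrib, sum_mul_gaussSum_inv _ hb,
    sum_mul_gaussSum_inv _ hb.neg, ← mul_add, stdAddChar_add_stdAddChar_neg]
  ring

/-- The contribution `∑_{χ mod d, χ even} χ(a) τ(conj χ) ∑′_{n ≤ y} σ_s(χ, n)` of a single modulus
`d` to the divisor identity. -/
noncomputable def evenCharacterSum (d : ℕ) (a : ℤ) (s : ℂ) (y : ℝ) : ℂ :=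
  ∑' χ : DirichletCharacter ℂ d,
    if χ.Even then χ (a : ZMod d) * tauConj d χ * psum y (fun n ↦ sigmaChi χ s n) else 0

lemma evenCharacterSum_one (a : ℤ) (s : ℂ) (y : ℝ) :
    evenCharacterSum 1 a s y = psum y (fun n ↦ csigma s n) := by
  have apply_eq_one (χ : DirichletCharacter ℂ 1) (b : ZMod 1) : χ b = 1 := by
    rw [Subsingleton.elim b 1, map_one]
  have stdAddChar_eq_one (r : ZMod 1) : ZMod.stdAddChar r = 1 := by
    rw [Subsingleton.elim r 0, AddChar.map_zero_eq_one]
  simp [evenCharacterSum, tsum_fintype, DirichletCharacter.Even, sigmaChi, csigma,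
    tauConj_eq_gaussSum, gaussSum, apply_eq_one, stdAddChar_eq_one]

theorem evenCharacterSum_eq {a : ℤ} (ha : IsUnit (a : ZMod d)) (s : ℂ) (y : ℝ) :
    evenCharacterSum d a s y = d.totient * ∑ m ∈ Icc 1 ⌊y⌋₊ with m.Coprime d,
      (Ffn (y / m) : ℂ) * (Real.cos (2 * π * m * a / d) : ℂ) * (m : ℂ) ^ s := by
  calc evenCharacterSum d a s y
      = ∑ m ∈ Icc 1 ⌊y⌋₊, (Ffn (y / m) : ℂ) * (m : ℂ) ^ s *
          ∑ χ : DirichletCharacter ℂ d,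
            if χ.Even then χ ((m * a : ℤ) : ZMod d) * tauConj d χ else 0 := by
        simp only [evenCharacterSum, tsum_fintype, sigmaChi, psum_sum_divisors]
        simp_rw [mul_sum]
        rw [sum_comm]
        refine sum_congr rfl fun χ _ ↦ ?_
        split_ifs
        · refine sum_congr rfl fun m _ ↦ ?_
          push_cast
          rw [map_mul]
          ring
        · simp
    _ = ∑ m ∈ Icc 1 ⌊y⌋₊ with m.Coprime d, (Ffn (y / m) : ℂ) * (m : ℂ) ^ s *
          ∑ χ : DirichletCharacter ℂ d,
            if χ.Even then χ ((m * a : ℤ) : ZMod d) * tauConj d χ else 0 := by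
        refine (sum_filter_of_ne fun m _ hm ↦ ?_).symm
        contrapose! hm
        have hnonunit : ¬IsUnit ((m * a : ℤ) : ZMod d) := by
          push_cast
          exact fun h ↦ hm ((ZMod.isUnit_iff_coprime m d).1 (isUnit_of_mul_isUnit_left h))
        simp only [MulChar.map_nonunit _ hnonunit, zero_mul, ite_self, sum_const_zero, mul_zero]
    _ = _ := by
        rw [mul_sum]
        refine sum_congr rfl fun m hm ↦ ?_
        have hunit : IsUnit ((m * a : ℤ) : ZMod d) := by
          push_cast
          exact ((ZMod.isUnit_iff_coprime m d).2 (mem_filter.1 hm).2).mul ha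
        rw [sum_even_mul_tauConj hunit]
        push_cast
        ring_nf

end Characters

section Regrouping

lemma tsum_succ_eq_sum_Icc {M : Type*} [AddCommMonoid M] [TopologicalSpace M]
    {f : ℕ → M} {N : ℕ} (hf : ∀ n, N < n → f n = 0) :
    ∑' n, f (n + 1) = ∑ n ∈ Icc 1 N, f n := by
  rw [tsum_eq_sum (s := range N) fun n hn ↦ hf _ (by simpa [Nat.lt_succ_iff] using hn),
    range_eq_Ico, sum_Ico_add' f 0 N 1]
  rfl

lemma sum_Icc_filter_gcd_eq {M : Type*} [AddCommMonoid M] (f : ℕ → M) {e k : ℕ} (he : e ≠ 0)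
    (N : ℕ) :
    ∑ n ∈ Icc 1 N with n.gcd (e * k) = e, f n =
      ∑ m ∈ Icc 1 (N / e) with m.Coprime k, f (e * m) := by
  have hepos : 0 < e := Nat.pos_of_ne_zero he
  symm
  refine sum_bij (fun m _ ↦ e * m) ?_ ?_ ?_ fun _ _ ↦ rfl
  · intro m hm
    obtain ⟨hm, hcop⟩ := mem_filter.1 hm
    obtain ⟨hm₁, hmN⟩ := mem_Icc.1 hm
    rw [mem_filter, mem_Icc, Nat.gcd_mul_left, hcop, mul_one]
    exact ⟨⟨Nat.mul_pos hepos hm₁, mul_comm m e ▸ (Nat.le_div_iff_mul_le hepos).1 hmN⟩, rfl⟩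
  · exact fun m₁ _ m₂ _ h ↦ Nat.eq_of_mul_eq_mul_left hepos h
  · intro n hn
    obtain ⟨hn, hgcd⟩ := mem_filter.1 hn
    obtain ⟨hn₁, hnN⟩ := mem_Icc.1 hn
    obtain ⟨m, rfl⟩ : e ∣ n := hgcd ▸ Nat.gcd_dvd_left n _
    rw [Nat.gcd_mul_left, Nat.mul_eq_left he] at hgcd
    refine ⟨m, mem_filter.2 ⟨mem_Icc.2 ⟨Nat.pos_of_mul_pos_left hn₁, ?_⟩, hgcd⟩, rfl⟩
    exact (Nat.le_div_iff_mul_le hepos).2 (mul_comm e m ▸ hnN)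

lemma sum_Icc_eq_sum_divisors_sum_coprime {M : Type*} [AddCommMonoid M] (f : ℕ → M) {q : ℕ}
    (hq : q ≠ 0) (N : ℕ) :
    ∑ n ∈ Icc 1 N, f n =
      ∑ e ∈ q.divisors, ∑ m ∈ Icc 1 (N / e) with m.Coprime (q / e), f (e * m) := by
  rw [← sum_fiberwise_of_maps_to (g := fun n ↦ n.gcd q) (t := q.divisors)
    fun n _ ↦ Nat.mem_divisors.2 ⟨n.gcd_dvd_right q, hq⟩]
  refine sum_congr rfl fun e he ↦ ?_
  obtain ⟨k, rfl⟩ := Nat.dvd_of_mem_divisors he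
  have he₀ : e ≠ 0 := left_ne_zero_of_mul hq
  rw [sum_Icc_filter_gcd_eq f he₀, Nat.mul_div_cancel_left k (Nat.pos_of_ne_zero he₀)]

end Regrouping

lemma sum_coprime_Ffn_mul_cos_eq {e k : ℕ} (he : e ≠ 0) (hk : k ≠ 0) {a : ℤ}
    (ha : IsUnit (a : ZMod k)) (s : ℂ) (x : ℝ) :
    ∑ m ∈ Icc 1 (⌊x⌋₊ / e) with m.Coprime k, (Ffn (x / (e * m : ℕ)) : ℂ) *
        (Real.cos (2 * π * (e * m : ℕ) * a / (e * k : ℕ)) : ℂ) * ((e * m : ℕ) : ℂ) ^ s =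
      ((e * k : ℕ) : ℂ) ^ s * (((k : ℂ) ^ s * k.totient)⁻¹ *
        evenCharacterSum k a s (k * x / (e * k : ℕ))) := by
  have : NeZero k := ⟨hk⟩
  have he' : (e : ℝ) ≠ 0 := mod_cast he
  have hk' : (k : ℝ) ≠ 0 := mod_cast hk
  have hks : (k : ℂ) ^ s ≠ 0 := by simp [cpow_eq_zero_iff, hk]
  have hφ : (k.totient : ℂ) ≠ 0 := mod_cast (Nat.totient_pos.2 (NeZero.pos k)).ne'
  have hy : k * x / (e * k : ℕ) = x / e := by
    push_cast
    field_simp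
  have hcos (m : ℕ) : 2 * π * (e * m : ℕ) * a / (e * k : ℕ) = 2 * π * m * a / k := by
    push_cast
    field_simp
  rw [hy, evenCharacterSum_eq ha, Nat.floor_div_natCast]
  simp only [hcos]
  simp only [Nat.cast_mul, natCast_mul_natCast_cpow, ← div_div, mul_sum]
  refine sum_congr rfl fun m _ ↦ ?_
  field_simp

theorem tsum_Ffn_mul_cos_eq_sum_divisors {q : ℕ} (hq : q ≠ 0) {a : ℤ} (ha : IsCoprime a q)
    (s : ℂ) {x : ℝ} (hx : 0 < x) :
    ∑' n : ℕ, (Ffn (x / (n + 1)) : ℂ) * (Real.cos (2 * π * (n + 1) * a / q) : ℂ) *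
        ((n : ℂ) + 1) ^ s =
      (q : ℂ) ^ s * ∑ d ∈ q.divisors,
        ((d : ℂ) ^ s * d.totient)⁻¹ * evenCharacterSum d a s (d * x / q) := by
  set f : ℕ → ℂ := fun n ↦
    (Ffn (x / n) : ℂ) * (Real.cos (2 * π * n * a / q) : ℂ) * (n : ℂ) ^ s with hf
  have hvanish : ∀ n, ⌊x⌋₊ < n → f n = 0 := by
    intro n hn
    have hxn : x < n := (Nat.floor_lt hx.le).1 hn
    have hn₀ : (0 : ℝ) < n := hx.trans hxn
    simp only [hf, Ffn_eq_zero (div_pos hx hn₀) ((div_lt_one hn₀).2 hxn), ofReal_zero, zero_mul]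
  calc _ = ∑' n, f (n + 1) := by simp only [hf, Nat.cast_add, Nat.cast_one]
    _ = ∑ e ∈ q.divisors, ∑ m ∈ Icc 1 (⌊x⌋₊ / e) with m.Coprime (q / e), f (e * m) := by
        rw [tsum_succ_eq_sum_Icc hvanish, sum_Icc_eq_sum_divisors_sum_coprime f hq]
    _ = ∑ e ∈ q.divisors, (q : ℂ) ^ s * ((((q / e : ℕ) : ℂ) ^ s * (q / e).totient)⁻¹ *
          evenCharacterSum (q / e) a s ((q / e : ℕ) * x / q)) := by
        refine sum_congr rfl fun e he ↦ ?_
        obtain ⟨k, rfl⟩ := Nat.dvd_of_mem_divisors he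
        obtain ⟨he₀, hk₀⟩ := mul_ne_zero_iff.1 hq
        rw [Nat.mul_div_cancel_left k (Nat.pos_of_ne_zero he₀)]
        have hak : IsCoprime (k : ℤ) a := (ha.of_isCoprime_of_dvd_right (by simp)).symm
        exact sum_coprime_Ffn_mul_cos_eq he₀ hk₀ ((ZMod.coe_int_isUnit_iff_isCoprime a k).2 hak) s x
    _ = _ := by
        rw [mul_sum]
        exact Nat.sum_div_divisors q fun d ↦ (q : ℂ) ^ s *
          (((d : ℂ) ^ s * d.totient)⁻¹ * evenCharacterSum d a s (d * x / q))

theorem even_character_divisor_identity_general {q : ℕ} (hq : q ≠ 0) {a : ℤ} (ha : IsCoprime a q)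
    (s : ℂ) {x : ℝ} (hx : 0 < x) :
    (∑' n : ℕ, ((Ffn (x / ((n : ℝ) + 1)) : ℝ) : ℂ) *
        ((Real.cos (2 * π * ((n : ℝ) + 1) * a / q) : ℝ) : ℂ) * ((n : ℂ) + 1) ^ s)
    = (q : ℂ) ^ s * psum (x / q) (fun n => csigma s n)
      + (q : ℂ) ^ s *
        ∑ d ∈ q.divisors.filter (fun d => 1 < d),
          ((d : ℂ) ^ s * (Nat.totient d : ℂ))⁻¹ *
            ∑' χ : DirichletCharacter ℂ d,
              if χ.Even then
                χ (a : ZMod d) * tauConj d χ *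
                  psum (d * x / q) (fun n => sigmaChi χ s n)
              else 0 := by
  have hdivisors : {d ∈ q.divisors | 1 < d} = q.divisors.erase 1 := by
    ext d
    have : d ∈ q.divisors → 0 < d := Nat.pos_of_mem_divisors
    grind
  rw [tsum_Ffn_mul_cos_eq_sum_divisors hq ha s hx, hdivisors, ← mul_add,
    ← add_sum_erase _ _ (Nat.one_mem_divisors.2 hq), evenCharacterSum_one]
  simp [evenCharacterSum]

theorem even_character_divisor_identity
    (q : ℕ) (hq : q.Prime) (a : ℕ) (ha0 : 0 < a) (haq : a < q)
    (s : ℂ) (x : ℝ) (hx : 0 < x) :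
    (∑' n : ℕ, ((Ffn (x / ((n : ℝ) + 1)) : ℝ) : ℂ) *
        ((Real.cos (2 * π * ((n : ℝ) + 1) * a / q) : ℝ) : ℂ) * ((n : ℂ) + 1) ^ s)
    = (q : ℂ) ^ s * psum (x / q) (fun n => csigma s n)
      + (q : ℂ) ^ s *
        ∑ d ∈ q.divisors.filter (fun d => 1 < d),
          ((d : ℂ) ^ s * (Nat.totient d : ℂ))⁻¹ *
            ∑' χ : DirichletCharacter ℂ d,
              if χ.Even then
                χ (a : ZMod d) * tauConj d χ *
                  psum (d * x / q) (fun n => sigmaChi χ s n)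
              else 0 := by
  have ha : a.Coprime q := (Nat.coprime_of_lt_prime ha0.ne' haq hq).symm
  simpa using even_character_divisor_identity_general hq.ne_zero ha.isCoprime s hx
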